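/- arXiv:2506.20809 — 2 statements merged into one kernel-verified Lean document; each statement's English description precedes it below -/
import Mathlib

section
/- For every integer n ≥ 0, every integer m ≥ 0, and every real x > 1, the derivative relation (1−x^2)·(Q_n^m)′(x) = (m−n−1)·Q_{n+1}^m(x) + (n+1)·x·Q_n^m(x) holds for the associated Legendre functions of the second kind. -/
noncomputable section

open Real MeasureTheory

/-- Legendre polynomial via Rodrigues' formula. -/
def legendreP (n : ℕ) (x : ℝ) : ℝ :=
  (1 / (2 ^ n * (n.factorial : ℝ))) * iteratedDeriv n (fun y : ℝ => (y ^ 2 - 1) ^ n) x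

/-- Legendre function of the second kind (Neumann's integral), for `x > 1`. -/
def legendreQ (n : ℕ) (x : ℝ) : ℝ :=
  (1 / 2) * ∫ t in (-1 : ℝ)..1, legendreP n t / (x - t)

/-- Associated Legendre function of the second kind, off the cut (`x > 1`). -/
def assocQ (n m : ℕ) (x : ℝ) : ℝ :=
  Real.sqrt (x ^ 2 - 1) ^ m * iteratedDeriv m (legendreQ n) x

/-!
Rodrigues' formula and `n` integrations by parts turn Neumann's integral into Schläfli's,
`Q_n(x) = (-1)^n / 2^(n+1) * I n (n+1)` with `I n k = ∫ (t^2-1)^n / (x-t)^k dt` over `[-1, 1]`.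
Differentiating in `x` only raises `k`, so every `Q_n^(m)` is an explicit multiple of
`I n (n+m+1)`. Integrating the `t`-derivative of `(t^2-1)^(n+1) / (x-t)^k`, and writing
`t (x-t) = (x^2-1) - x (x-t) - (t^2-1)` in the numerator, gives a three-term relation between
`I n (k+1)`, `I n k` and `I (n+1) (k+1)`. For `k = n+m+1` it expresses `(1-x^2) Q_n^(m+1)` through
`Q_(n+1)^(m)` and `Q_n^(m)`, and the factor `(x^2-1)^(m/2)` only changes the coefficient of the
latter.
-/

/-- The generalized Stieltjes transform of order `k` of a density `f` on the interval from `a` to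
`b`, with the sign convention `x - t` of Neumann's integral. It is meaningful for `x` off the
interval. -/
def stieltjesTransform (a b : ℝ) (f : ℝ → ℝ) (k : ℕ) (x : ℝ) : ℝ :=
  ∫ t in a..b, f t / (x - t) ^ k

lemma hasDerivAt_inv_pow {𝕜 : Type*} [NontriviallyNormedField 𝕜] (k : ℕ) {y : 𝕜} (hy : y ≠ 0) :
    HasDerivAt (fun z : 𝕜 ↦ (z ^ k)⁻¹) (-k * (y ^ (k + 1))⁻¹) y := by
  refine ((hasDerivAt_pow k y).fun_inv (pow_ne_zero k hy)).congr_deriv ?_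
  rcases k with _ | k
  · simp
  · simp only [Nat.add_sub_cancel]
    field_simp
    ring

lemma hasDerivAt_sqrt_pow (m : ℕ) {y : ℝ} (hy : y ≠ 0) :
    HasDerivAt (fun z ↦ √z ^ m) (m * √y ^ m / (2 * y)) y := by
  refine ((hasDerivAt_sqrt hy).fun_pow m).congr_deriv ?_
  rcases m with _ | m
  · simp
  · have hsqrt : 1 / √y = √y / y := sqrt_div_self'.symm
    rw [Nat.add_sub_cancel, mul_comm 2 √y, ← div_div, hsqrt]
    ring

lemma iteratedDeriv_pow_eq_zero {𝕜 : Type*} [NontriviallyNormedField 𝕜] {f : 𝕜 → 𝕜} {c : 𝕜}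
    {j n : ℕ} (hf : ContDiffAt 𝕜 j f c) (hc : f c = 0) (hj : j < n) :
    iteratedDeriv j (fun y ↦ f y ^ n) c = 0 := by
  induction n generalizing j with
  | zero => omega
  | succ n ih =>
    simp only [pow_succ']
    rw [iteratedDeriv_fun_mul hf (hf.pow n)]
    refine Finset.sum_eq_zero fun i hi ↦ ?_
    rcases i.eq_zero_or_pos with rfl | hi_pos
    · simp [hc]
    · have hle : j - i ≤ j := Nat.sub_le j i
      have hi_le : i ≤ j := Finset.mem_range_succ_iff.1 hi
      rw [ih (hf.of_le (mod_cast hle)) (by omega), mul_zero]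

lemma exists_pos_forall_ball_le_dist {α : Type*} [PseudoMetricSpace α] {s : Set α} {x : α}
    (hs : IsClosed s) (hx : x ∉ s) :
    ∃ δ > 0, ∀ y ∈ Metric.ball x δ, ∀ t ∈ s, δ ≤ dist y t := by
  obtain ⟨ε, hε, hball⟩ := Metric.isOpen_iff.1 hs.isOpen_compl x hx
  refine ⟨ε / 2, half_pos hε, fun y hy t ht ↦ ?_⟩
  have hxt : ε ≤ dist t x := not_lt.1 fun h ↦ hball h ht
  have hyx : dist y x < ε / 2 := hy
  linarith [dist_triangle_left t x y]

lemma sub_ne_zero_of_notMem_of_mem {G : Type*} [AddGroup G] {s : Set G} {x t : G} (hx : x ∉ s)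
    (ht : t ∈ s) : x - t ≠ 0 :=
  sub_ne_zero.2 (ne_of_mem_of_not_mem ht hx).symm

section StieltjesTransform

open Set
open scoped Interval Topology

variable {a b x : ℝ} {f g : ℝ → ℝ}

lemma intervalIntegrable_div_sub_pow (hf : IntervalIntegrable f volume a b) (k : ℕ)
    (hx : x ∉ [[a, b]]) : IntervalIntegrable (fun t ↦ f t / (x - t) ^ k) volume a b := by
  have hcont : ContinuousOn (fun t ↦ ((x - t) ^ k)⁻¹) [[a, b]] :=
    ContinuousOn.inv₀ (by fun_prop) fun t ht ↦ pow_ne_zero k (sub_ne_zero_of_notMem_of_mem hx ht)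
  simpa only [div_eq_mul_inv] using hf.mul_continuousOn hcont

lemma stieltjesTransform_sub (hf : IntervalIntegrable f volume a b)
    (hg : IntervalIntegrable g volume a b) (k : ℕ) (hx : x ∉ [[a, b]]) :
    stieltjesTransform a b (fun t ↦ f t - g t) k x =
      stieltjesTransform a b f k x - stieltjesTransform a b g k x := by
  simp only [stieltjesTransform, sub_div]
  exact intervalIntegral.integral_sub (intervalIntegrable_div_sub_pow hf k hx)
    (intervalIntegrable_div_sub_pow hg k hx)

lemma stieltjesTransform_const_mul (c : ℝ) (f : ℝ → ℝ) (k : ℕ) (x : ℝ) :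
    stieltjesTransform a b (fun t ↦ c * f t) k x = c * stieltjesTransform a b f k x := by
  simp only [stieltjesTransform, mul_div_assoc, intervalIntegral.integral_const_mul]

lemma stieltjesTransform_id_mul (hf : IntervalIntegrable f volume a b) (k : ℕ)
    (hx : x ∉ [[a, b]]) :
    stieltjesTransform a b (fun t ↦ t * f t) (k + 1) x =
      x * stieltjesTransform a b f (k + 1) x - stieltjesTransform a b f k x := by
  simp only [stieltjesTransform]
  rw [← intervalIntegral.integral_const_mul, ← intervalIntegral.integral_sub
    ((intervalIntegrable_div_sub_pow hf (k + 1) hx).const_mul x)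
    (intervalIntegrable_div_sub_pow hf k hx)]
  refine intervalIntegral.integral_congr fun t ht ↦ ?_
  have hxt := sub_ne_zero_of_notMem_of_mem hx ht
  field_simp
  ring

lemma stieltjesTransform_sq_sub_const_mul (hf : IntervalIntegrable f volume a b) (c : ℝ) (k : ℕ)
    (hx : x ∉ [[a, b]]) :
    stieltjesTransform a b (fun t ↦ (t ^ 2 - c) * f t) (k + 1) x =
      (x ^ 2 - c) * stieltjesTransform a b f (k + 1) x - x * stieltjesTransform a b f k x -
        stieltjesTransform a b (fun t ↦ t * f t) k x := by
  have hf₁ : IntervalIntegrable (fun t ↦ t * f t) volume a b := hf.continuousOn_mul continuousOn_id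
  have hf₂ : IntervalIntegrable (fun t ↦ t * (t * f t)) volume a b :=
    hf₁.continuousOn_mul continuousOn_id
  have hsplit : (fun t ↦ (t ^ 2 - c) * f t) = fun t ↦ t * (t * f t) - c * f t := by
    funext t
    ring
  rw [hsplit, stieltjesTransform_sub hf₂ (hf.const_mul c) (k + 1) hx,
    stieltjesTransform_const_mul, stieltjesTransform_id_mul hf₁ k hx,
    stieltjesTransform_id_mul hf k hx]
  ring

lemma hasDerivAt_stieltjesTransform (hf : IntervalIntegrable f volume a b) (k : ℕ)
    (hx : x ∉ [[a, b]]) :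
    HasDerivAt (stieltjesTransform a b f k) (-k * stieltjesTransform a b f (k + 1) x) x := by
  obtain ⟨δ, hδ, hdist⟩ := exists_pos_forall_ball_le_dist isClosed_Icc hx
  have hnear : ∀ y ∈ Metric.ball x δ, y ∉ [[a, b]] := fun y hy hmem ↦
    hδ.not_ge ((hdist y hy y hmem).trans_eq (dist_self y))
  have hint := (intervalIntegrable_div_sub_pow hf (k + 1) hx).const_mul (-k : ℝ)
  have hbound : ∀ t ∈ Ι a b, ∀ y ∈ Metric.ball x δ,
      ‖-k * (f t / (y - t) ^ (k + 1))‖ ≤ ‖f t‖ * (k / δ ^ (k + 1)) := by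
    intro t ht y hy
    have hyt : δ ≤ ‖y - t‖ := hdist y hy t (uIoc_subset_uIcc ht)
    calc ‖-k * (f t / (y - t) ^ (k + 1))‖ = ‖f t‖ * (k / ‖y - t‖ ^ (k + 1)) := by
          rw [norm_mul, norm_neg, RCLike.norm_natCast, norm_div, norm_pow]
          ring
      _ ≤ ‖f t‖ * (k / δ ^ (k + 1)) := by gcongr
  have hderiv : ∀ t ∈ Ι a b, ∀ y ∈ Metric.ball x δ,
      HasDerivAt (fun z ↦ f t / (z - t) ^ k) (-k * (f t / (y - t) ^ (k + 1))) y := by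
    intro t ht y hy
    have hyt := sub_ne_zero_of_notMem_of_mem (hnear y hy) (uIoc_subset_uIcc ht)
    simp only [div_eq_mul_inv]
    exact (((hasDerivAt_inv_pow k hyt).comp_sub_const y t).const_mul (f t)).congr_deriv (by ring)
  have hmain := (intervalIntegral.hasDerivAt_integral_of_dominated_loc_of_deriv_le
    (Metric.ball_mem_nhds x hδ)
    (Filter.eventually_of_mem (Metric.ball_mem_nhds x hδ) fun y hy ↦
      (intervalIntegrable_div_sub_pow hf k (hnear y hy)).aestronglyMeasurable_restrict_uIoc)
    (intervalIntegrable_div_sub_pow hf k hx) hint.aestronglyMeasurable_restrict_uIoc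
    (.of_forall hbound) (hf.norm.mul_const _) (.of_forall hderiv)).2
  rwa [intervalIntegral.integral_const_mul] at hmain

lemma iteratedDeriv_stieltjesTransform (hf : IntervalIntegrable f volume a b) (k m : ℕ)
    (hx : x ∉ [[a, b]]) :
    iteratedDeriv m (stieltjesTransform a b f k) x =
      (-1) ^ m * k.ascFactorial m * stieltjesTransform a b f (k + m) x := by
  induction m generalizing x with
  | zero => simp
  | succ m ih =>
    have hnear : iteratedDeriv m (stieltjesTransform a b f k) =ᶠ[𝓝 x]
        fun y ↦ (-1) ^ m * k.ascFactorial m * stieltjesTransform a b f (k + m) y :=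
      Filter.eventually_of_mem (isClosed_Icc.isOpen_compl.mem_nhds hx) fun y hy ↦ ih hy
    rw [iteratedDeriv_succ, hnear.deriv_eq,
      ((hasDerivAt_stieltjesTransform hf (k + m) hx).const_mul _).deriv, Nat.ascFactorial_succ]
    push_cast
    ring_nf

lemma stieltjesTransform_of_hasDerivAt {f' : ℝ → ℝ} (hf : ∀ t ∈ [[a, b]], HasDerivAt f (f' t) t)
    (hf' : IntervalIntegrable f' volume a b) (ha : f a = 0) (hb : f b = 0) (k : ℕ)
    (hx : x ∉ [[a, b]]) :
    stieltjesTransform a b f' k x = -k * stieltjesTransform a b f (k + 1) x := by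
  have hkernel : ∀ t ∈ [[a, b]],
      HasDerivAt (fun t ↦ ((x - t) ^ k)⁻¹) (k / (x - t) ^ (k + 1)) t := fun t ht ↦
    ((hasDerivAt_inv_pow k (sub_ne_zero_of_notMem_of_mem hx ht)).comp_const_sub x t).congr_deriv
      (by ring)
  have hkernel_int := intervalIntegrable_div_sub_pow (f := fun _ ↦ (k : ℝ))
    intervalIntegrable_const (k + 1) hx
  have hparts := intervalIntegral.integral_mul_deriv_eq_deriv_mul hf hkernel hf' hkernel_int
  simp only [ha, hb, zero_mul, sub_zero, zero_sub] at hparts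
  calc stieltjesTransform a b f' k x
      = -∫ t in a..b, f t * (k / (x - t) ^ (k + 1)) := by
        rw [hparts, neg_neg]
        simp only [stieltjesTransform, div_eq_mul_inv]
    _ = -k * stieltjesTransform a b f (k + 1) x := by
        rw [neg_mul, stieltjesTransform, ← intervalIntegral.integral_const_mul]
        simp only [mul_div_left_comm]

lemma stieltjesTransform_iteratedDeriv {n : ℕ} (hf : ContDiff ℝ n f)
    (ha : ∀ j < n, iteratedDeriv j f a = 0) (hb : ∀ j < n, iteratedDeriv j f b = 0) (k : ℕ)
    (hx : x ∉ [[a, b]]) :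
    stieltjesTransform a b (iteratedDeriv n f) k x =
      (-1) ^ n * k.ascFactorial n * stieltjesTransform a b f (k + n) x := by
  induction n generalizing k with
  | zero => simp
  | succ n ih =>
    have hdiff : Differentiable ℝ (iteratedDeriv n f) :=
      hf.differentiable_iteratedDeriv n (mod_cast n.lt_succ_self)
    have hderiv : ∀ t ∈ [[a, b]],
        HasDerivAt (iteratedDeriv n f) (iteratedDeriv (n + 1) f t) t := fun t _ ↦ by
      simpa only [iteratedDeriv_succ] using (hdiff t).hasDerivAt
    have hint := (hf.continuous_iteratedDeriv (n + 1) le_rfl).intervalIntegrable (μ := volume) a b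
    rw [stieltjesTransform_of_hasDerivAt hderiv hint (ha n n.lt_succ_self) (hb n n.lt_succ_self)
        k hx, ih (hf.of_le (mod_cast n.le_succ)) (fun j hj ↦ ha j (hj.trans n.lt_succ_self))
        (fun j hj ↦ hb j (hj.trans n.lt_succ_self)), Nat.ascFactorial_succ]
    have hrising : (k : ℝ) * (k + 1).ascFactorial n = (k + n) * k.ascFactorial n := by
      exact_mod_cast Nat.succ_ascFactorial k n
    rw [add_right_comm k 1 n, ← add_assoc k n 1]
    push_cast
    linear_combination (-1) ^ (n + 1) * stieltjesTransform a b f (k + n + 1) x * hrising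

end StieltjesTransform

/-- The Stieltjes transform of order `k` on `[-1, 1]` of the polynomial `(t ^ 2 - 1) ^ n` from
Rodrigues' formula. For `k = n + 1` it is the integral in Schläfli's formula for `Q_n`. -/
def rodriguesTransform (n k : ℕ) (x : ℝ) : ℝ :=
  stieltjesTransform (-1) 1 (fun t ↦ (t ^ 2 - 1) ^ n) k x

section Legendre

open scoped Interval Topology

variable {x : ℝ}

lemma notMem_uIcc_neg_one_one (hx : 1 < |x|) : x ∉ [[(-1 : ℝ), 1]] := by
  rwa [Set.uIcc_of_le (by norm_num), Set.mem_Icc, ← abs_le, not_le]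

lemma sq_sub_one_ne_zero (hx : 1 < |x|) : x ^ 2 - 1 ≠ 0 :=
  (sub_pos.2 ((one_lt_sq_iff_one_lt_abs x).2 hx)).ne'

lemma eventually_one_lt_abs (hx : 1 < |x|) : ∀ᶠ y in 𝓝 x, 1 < |y| :=
  continuous_abs.continuousAt.eventually_const_lt hx

lemma intervalIntegrable_sq_sub_one_pow (n : ℕ) (a b : ℝ) :
    IntervalIntegrable (fun t : ℝ ↦ (t ^ 2 - 1) ^ n) volume a b :=
  Continuous.intervalIntegrable (by fun_prop) a b

lemma rodriguesTransform_recurrence (n k : ℕ) (hx : 1 < |x|) :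
    2 * (n + 1) * ((x ^ 2 - 1) * rodriguesTransform n (k + 1) x - x * rodriguesTransform n k x) =
      (2 * (n + 1) - k) * rodriguesTransform (n + 1) (k + 1) x := by
  have hx' := notMem_uIcc_neg_one_one hx
  have hderiv : ∀ t ∈ [[(-1 : ℝ), 1]], HasDerivAt (fun t : ℝ ↦ (t ^ 2 - 1) ^ (n + 1))
      (2 * (n + 1) * (t * (t ^ 2 - 1) ^ n)) t := fun t _ ↦
    (((hasDerivAt_pow 2 t).sub_const 1).fun_pow (n + 1)).congr_deriv (by
      push_cast [Nat.add_sub_cancel]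
      ring)
  have hparts := stieltjesTransform_of_hasDerivAt hderiv
    (Continuous.intervalIntegrable (by fun_prop) _ _) (by simp) (by simp) k hx'
  have hmul := stieltjesTransform_sq_sub_const_mul
    (intervalIntegrable_sq_sub_one_pow n _ _) 1 k hx'
  simp only [← pow_succ'] at hmul
  rw [stieltjesTransform_const_mul] at hparts
  unfold rodriguesTransform
  linear_combination hparts - 2 * (n + 1) * hmul

lemma legendreQ_eq_rodriguesTransform (n : ℕ) (hx : 1 < |x|) :
    legendreQ n x = (-1) ^ n / 2 ^ (n + 1) * rodriguesTransform n (n + 1) x := by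
  have hvanish : ∀ c : ℝ, c ^ 2 - 1 = 0 → ∀ j < n,
      iteratedDeriv j (fun y : ℝ ↦ (y ^ 2 - 1) ^ n) c = 0 := fun c hc j hj ↦
    iteratedDeriv_pow_eq_zero (f := fun y ↦ y ^ 2 - 1) (by fun_prop) hc hj
  have hparts := stieltjesTransform_iteratedDeriv (f := fun y ↦ (y ^ 2 - 1) ^ n) (by fun_prop)
    (hvanish (-1) (by norm_num)) (hvanish 1 (by norm_num)) 1 (notMem_uIcc_neg_one_one hx)
  calc legendreQ n x
      = 1 / 2 * stieltjesTransform (-1) 1 (legendreP n) 1 x := by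
        simp only [legendreQ, stieltjesTransform, pow_one]
    _ = 1 / 2 * (1 / (2 ^ n * n.factorial) *
          ((-1) ^ n * n.factorial * rodriguesTransform n (n + 1) x)) := by
        rw [show legendreP n = fun t ↦ 1 / (2 ^ n * (n.factorial : ℝ)) *
            iteratedDeriv n (fun y : ℝ ↦ (y ^ 2 - 1) ^ n) t from rfl, stieltjesTransform_const_mul,
          hparts, Nat.one_ascFactorial, add_comm 1 n, rodriguesTransform]
    _ = (-1) ^ n / 2 ^ (n + 1) * rodriguesTransform n (n + 1) x := by
        field_simp
        ring

lemma iteratedDeriv_legendreQ (n m : ℕ) (hx : 1 < |x|) :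
    iteratedDeriv m (legendreQ n) x = (-1) ^ (n + m) / 2 ^ (n + 1) * (n + 1).ascFactorial m *
      rodriguesTransform n (n + m + 1) x := by
  have hnear : legendreQ n =ᶠ[𝓝 x]
      fun y ↦ (-1) ^ n / 2 ^ (n + 1) * rodriguesTransform n (n + 1) y :=
    (eventually_one_lt_abs hx).mono fun _ hy ↦ legendreQ_eq_rodriguesTransform n hy
  rw [hnear.iteratedDeriv_eq, iteratedDeriv_const_mul_field]
  unfold rodriguesTransform
  rw [iteratedDeriv_stieltjesTransform (intervalIntegrable_sq_sub_one_pow n _ _) _ _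
    (notMem_uIcc_neg_one_one hx), add_right_comm n 1 m]
  ring

lemma hasDerivAt_iteratedDeriv_legendreQ (n m : ℕ) (hx : 1 < |x|) :
    HasDerivAt (iteratedDeriv m (legendreQ n)) (iteratedDeriv (m + 1) (legendreQ n) x) x := by
  have hnear : iteratedDeriv m (legendreQ n) =ᶠ[𝓝 x] fun y ↦ (-1) ^ (n + m) / 2 ^ (n + 1) *
      (n + 1).ascFactorial m * rodriguesTransform n (n + m + 1) y :=
    (eventually_one_lt_abs hx).mono fun _ hy ↦ iteratedDeriv_legendreQ n m hy
  have htransform := hasDerivAt_stieltjesTransform (intervalIntegrable_sq_sub_one_pow n (-1) 1)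
    (n + m + 1) (notMem_uIcc_neg_one_one hx)
  rw [iteratedDeriv_succ]
  exact ((htransform.const_mul _).congr_of_eventuallyEq hnear).differentiableAt.hasDerivAt

lemma iteratedDeriv_succ_legendreQ (n m : ℕ) (hx : 1 < |x|) :
    (1 - x ^ 2) * iteratedDeriv (m + 1) (legendreQ n) x =
      (m - n - 1) * iteratedDeriv m (legendreQ (n + 1)) x +
        (n + m + 1) * x * iteratedDeriv m (legendreQ n) x := by
  have hrec := rodriguesTransform_recurrence n (n + m + 1) hx
  have hrising : ((n : ℝ) + 1) * (n + 2).ascFactorial m =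
      (n + m + 1) * (n + 1).ascFactorial m := by
    rw [add_right_comm (n : ℝ) m 1]
    exact_mod_cast Nat.succ_ascFactorial (n + 1) m
  rw [iteratedDeriv_legendreQ n (m + 1) hx, iteratedDeriv_legendreQ (n + 1) m hx,
    iteratedDeriv_legendreQ n m hx, Nat.ascFactorial_succ, ← add_assoc n m 1,
    add_right_comm n 1 m]
  push_cast at hrec ⊢
  linear_combination (-1) ^ (n + m) / 2 ^ (n + 2) * (n + 2).ascFactorial m * hrec -
    (-1) ^ (n + m) / 2 ^ (n + 1) * ((x ^ 2 - 1) * rodriguesTransform n (n + m + 1 + 1) x -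
      x * rodriguesTransform n (n + m + 1) x) * hrising

lemma hasDerivAt_assocQ (n m : ℕ) (hx : 1 < |x|) :
    HasDerivAt (assocQ n m) (m * x / (x ^ 2 - 1) * assocQ n m x +
      √(x ^ 2 - 1) ^ m * iteratedDeriv (m + 1) (legendreQ n) x) x := by
  have hx_sq := sq_sub_one_ne_zero hx
  have hsqrt := (hasDerivAt_sqrt_pow m hx_sq).comp x ((hasDerivAt_pow 2 x).sub_const 1)
  refine (hsqrt.mul (hasDerivAt_iteratedDeriv_legendreQ n m hx)).congr_deriv ?_
  simp only [assocQ, Function.comp_apply]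
  field_simp
  ring

end Legendre

theorem assocQ_deriv_relation_general (n m : ℕ) {x : ℝ} (hx : 1 < |x|) :
    (1 - x ^ 2) * deriv (assocQ n m) x =
      ((m : ℝ) - n - 1) * assocQ (n + 1) m x + ((n : ℝ) + 1) * x * assocQ n m x := by
  have hx_sq := sq_sub_one_ne_zero hx
  have hcancel : (1 - x ^ 2) * (m * x / (x ^ 2 - 1)) = -(m * x) := by
    field_simp
    ring
  have hrec := iteratedDeriv_succ_legendreQ n m hx
  rw [(hasDerivAt_assocQ n m hx).deriv]
  unfold assocQ
  linear_combination √(x ^ 2 - 1) ^ m * (hrec + iteratedDeriv m (legendreQ n) x * hcancel)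

theorem assocQ_deriv_relation (n m : ℕ) (x : ℝ) (hx : 1 < x) :
    (1 - x ^ 2) * deriv (assocQ n m) x =
      ((m : ℝ) - n - 1) * assocQ (n + 1) m x + ((n : ℝ) + 1) * x * assocQ n m x := by
  exact assocQ_deriv_relation_general n m (hx.trans_le (le_abs_self x))
end
end

section
/- Fix integers n ≥ 0 and 0 ≤ m ≤ n, and let g(u,v,φ) = P_n^m(u)·𝖯_n^m(v)·e^{imφ} (a regular solid prolate spheroidal harmonic in coordinate form). Then for every u > 1, v ∈ (−1,1), and φ ∈ ℝ, g is annihilated by the prolate spheroidal Laplacian: ∂_u((u^2−1)·∂_u g) + ∂_v((1−v^2)·∂_v g) + ((u^2−v^2)/((u^2−1)·(1−v^2)))·∂^2_{φφ} g = 0. -/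
noncomputable section

open Real MeasureTheory

/-- Associated Legendre function of the first kind, off the cut (`x > 1`). -/
def assocP (n m : ℕ) (x : ℝ) : ℝ :=
  Real.sqrt (x ^ 2 - 1) ^ m * iteratedDeriv m (legendreP n) x

/-- Ferrers function of the first kind, on the cut (`-1 ≤ v ≤ 1`). -/
def ferrersP (n m : ℕ) (v : ℝ) : ℝ :=
  Real.sqrt (1 - v ^ 2) ^ m * iteratedDeriv m (legendreP n) v

/-!
Every derivative of a solution of `(x² - 1) y'' + a x y' + b y = 0` solves an equation of the same
shape, with `(a, b)` replaced by `(a + 2, b + a)`. Starting from `(x² - 1)ⁿ`, differentiating `n`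
times gives Legendre's equation for `Pₙ`, and `m` further times the equation of `Pₙ⁽ᵐ⁾`. A factor
`s` with `s' / s = m x / (x² - 1)` turns the latter into the associated Legendre equation
`((x² - 1) f')' = (n (n + 1) + m² / (x² - 1)) f`. Both `(x² - 1)^(m/2)` and `(1 - x²)^(m/2)` are
such factors, so the radial and the angular factor satisfy the same equation. In the separated
product the terms `n (n + 1)` cancel, and `m² / (u² - 1) - m² / (v² - 1)` is balanced by the
azimuthal derivative.
-/

open Topology
open scoped ContDiff

section Ultraspherical

variable {𝕜 : Type*} [NontriviallyNormedField 𝕜] {a b : 𝕜} {y : 𝕜 → 𝕜}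

/-- Smooth global solutions of the ultraspherical (Gegenbauer) equation, parametrized by the two
coefficients `a`, `b` rather than by degree and order, since differentiation acts on these by
`(a, b) ↦ (a + 2, b + a)`. -/
structure IsUltrasphericalSolution (a b : 𝕜) (y : 𝕜 → 𝕜) : Prop where
  contDiff : ContDiff 𝕜 ∞ y
  ode : ∀ x, (x ^ 2 - 1) * deriv (deriv y) x + a * x * deriv y x + b * y x = 0

theorem hasDerivAt_sq_sub_one (x : 𝕜) : HasDerivAt (fun w : 𝕜 => w ^ 2 - 1) (2 * x) x := by
  simpa using (hasDerivAt_pow 2 x).sub_const 1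

namespace IsUltrasphericalSolution

theorem of_first_order {k : 𝕜} (hy : ContDiff 𝕜 ∞ y)
    (h : ∀ x, (x ^ 2 - 1) * deriv y x = k * x * y x) :
    IsUltrasphericalSolution (2 - k) (-k) y where
  contDiff := hy
  ode x := by
    have hy₀ := (hy.differentiable (by simp) x).hasDerivAt
    have hy₁ := ((contDiff_infty_iff_deriv.1 hy).2.differentiable (by simp) x).hasDerivAt
    have hleft := (hasDerivAt_sq_sub_one x).mul hy₁
    have hright := ((hasDerivAt_id x).const_mul k).mul hy₀
    have hderiv := hleft.unique (hright.congr_of_eventuallyEq (.of_forall h))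
    simp only [id_eq] at hderiv
    linear_combination hderiv

protected theorem const_mul (hy : IsUltrasphericalSolution a b y) (c : 𝕜) :
    IsUltrasphericalSolution a b (fun x => c * y x) where
  contDiff := contDiff_const.mul hy.contDiff
  ode x := by
    simp only [deriv_const_mul_field']
    linear_combination c * hy.ode x

protected theorem deriv (hy : IsUltrasphericalSolution a b y) :
    IsUltrasphericalSolution (a + 2) (b + a) (deriv y) where
  contDiff := (contDiff_infty_iff_deriv.1 hy.contDiff).2
  ode x := by
    have smooth₁ := (contDiff_infty_iff_deriv.1 hy.contDiff).2
    have smooth₂ := (contDiff_infty_iff_deriv.1 smooth₁).2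
    have hy₀ := (hy.contDiff.differentiable (by simp) x).hasDerivAt
    have hy₁ := (smooth₁.differentiable (by simp) x).hasDerivAt
    have hy₂ := (smooth₂.differentiable (by simp) x).hasDerivAt
    have hleft := (((hasDerivAt_sq_sub_one x).mul hy₂).add
      (((hasDerivAt_id x).const_mul a).mul hy₁)).add (hy₀.const_mul b)
    have hderiv := hleft.unique ((hasDerivAt_const x 0).congr_of_eventuallyEq (.of_forall hy.ode))
    simp only [id_eq] at hderiv
    linear_combination hderiv

protected theorem iteratedDeriv (hy : IsUltrasphericalSolution a b y) (k : ℕ) :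
    IsUltrasphericalSolution (a + 2 * k) (b + k * a + k * (k - 1)) (iteratedDeriv k y) := by
  induction k with
  | zero => simpa using hy
  | succ k ih =>
    rw [iteratedDeriv_succ]
    convert ih.deriv using 1 <;> push_cast <;> ring

end IsUltrasphericalSolution

theorem isUltrasphericalSolution_sq_sub_one_pow (n : ℕ) :
    IsUltrasphericalSolution (2 - 2 * n : 𝕜) (-(2 * n)) (fun x : 𝕜 => (x ^ 2 - 1) ^ n) := by
  refine .of_first_order (by fun_prop) fun x => ?_
  rw [((hasDerivAt_sq_sub_one x).fun_pow n).deriv]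
  cases n with
  | zero => simp
  | succ n => rw [Nat.add_sub_cancel]; ring

theorem isUltrasphericalSolution_legendreP (n : ℕ) :
    IsUltrasphericalSolution (2 : ℝ) (-(n * (n + 1))) (legendreP n) := by
  convert ((isUltrasphericalSolution_sq_sub_one_pow n).iteratedDeriv n).const_mul
    (1 / (2 ^ n * (n.factorial : ℝ))) using 1
  · ring
  · ring
  · rfl

theorem isUltrasphericalSolution_iteratedDeriv_legendreP (n m : ℕ) :
    IsUltrasphericalSolution (2 * (m + 1) : ℝ) (m * (m + 1) - n * (n + 1))
      (iteratedDeriv m (legendreP n)) := by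
  convert (isUltrasphericalSolution_legendreP n).iteratedDeriv m using 1 <;> ring

end Ultraspherical

section LegendreOperator

/-- Legendre's differential operator `f ↦ ((x² - 1) f')'`, the common radial and angular part of
the prolate spheroidal Laplacian. -/
def legendreOp {E : Type*} [NormedAddCommGroup E] [NormedSpace ℝ E] (f : ℝ → E) (x : ℝ) : E :=
  deriv (fun w => (w ^ 2 - 1) • deriv f w) x

theorem legendreOp_const_mul {A : Type*} [NormedField A] [NormedAlgebra ℝ A] (c : A) (f : ℝ → A)
    (x : ℝ) : legendreOp (fun w => c * f w) x = c * legendreOp f x := by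
  simp only [legendreOp, deriv_const_mul_field', ← mul_smul_comm]

theorem deriv_ofReal_comp (f : ℝ → ℝ) (x : ℝ) :
    deriv (fun w => (f w : ℂ)) x = ((deriv f x : ℝ) : ℂ) := by
  by_cases hf : DifferentiableAt ℝ f x
  · exact hf.hasDerivAt.ofReal_comp.deriv
  · have hf' : ¬DifferentiableAt ℝ (fun w => (f w : ℂ)) x := fun h =>
      hf (Complex.reCLM.differentiableAt.comp x h)
    rw [deriv_zero_of_not_differentiableAt hf, deriv_zero_of_not_differentiableAt hf',
      Complex.ofReal_zero]

theorem legendreOp_ofReal_comp (f : ℝ → ℝ) (x : ℝ) :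
    legendreOp (fun w => (f w : ℂ)) x = ((legendreOp f x : ℝ) : ℂ) := by
  simp only [legendreOp, deriv_ofReal_comp, Complex.real_smul, ← Complex.ofReal_mul, smul_eq_mul]

theorem legendreOp_weight_mul {s y : ℝ → ℝ} {μ x : ℝ} (hx : x ^ 2 ≠ 1)
    (hs : ∀ᶠ w in 𝓝 x, HasDerivAt s (μ * w / (w ^ 2 - 1) * s w) w) (hy : ContDiffAt ℝ 2 y x) :
    legendreOp (fun w => s w * y w) x =
      s x * ((x ^ 2 - 1) * deriv (deriv y) x + 2 * (μ + 1) * x * deriv y x +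
        (μ * (μ + 1) + μ ^ 2 / (x ^ 2 - 1)) * y x) := by
  have hne : ∀ᶠ w in 𝓝 x, w ^ 2 ≠ 1 := (continuous_pow 2).continuousAt.eventually_ne hx
  have hflux : (fun w => (w ^ 2 - 1) • deriv (fun w => s w * y w) w) =ᶠ[𝓝 x]
      fun w => s w * (μ * w * y w + (w ^ 2 - 1) * deriv y w) := by
    filter_upwards [hne, hs, hy.eventually (by simp)] with w hw hsw hyw
    rw [(hsw.fun_mul (hyw.differentiableAt (by simp)).hasDerivAt).deriv, smul_eq_mul]
    field_simp [sub_ne_zero.2 hw]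
  have hy₀ := (hy.differentiableAt (by simp)).hasDerivAt
  have hy₁ : HasDerivAt (deriv y) (deriv (deriv y) x) x :=
    ((hy.derivWithin one_add_one_eq_two.le).differentiableAt one_ne_zero).hasDerivAt
  have hflux' := hs.self_of_nhds.fun_mul
    ((((hasDerivAt_id' x).const_mul μ).fun_mul hy₀).fun_add ((hasDerivAt_sq_sub_one x).fun_mul hy₁))
  rw [legendreOp, hflux.deriv_eq, hflux'.deriv]
  field_simp [sub_ne_zero.2 hx]
  ring

end LegendreOperator

section AssociatedLegendre

variable {x : ℝ}

theorem hasDerivAt_sqrt_pow_s12 {q : ℝ → ℝ} {q' : ℝ} (hq : HasDerivAt q q' x) (hpos : 0 < q x)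
    (m : ℕ) :
    HasDerivAt (fun w => √(q w) ^ m) (m * (q' / (2 * q x)) * √(q x) ^ m) x := by
  refine ((hq.sqrt hpos.ne').fun_pow m).congr_deriv ?_
  have hsqrt : √(q x) ≠ 0 := (sqrt_pos.2 hpos).ne'
  cases m with
  | zero => simp
  | succ m =>
    rw [Nat.add_sub_cancel]
    field_simp
    linear_combination -(√(q x) ^ m * q') * sq_sqrt hpos.le

theorem eventually_hasDerivAt_sqrt_mul_sq_sub_one_pow {σ : ℝ} (hx : 0 < σ * (x ^ 2 - 1)) (m : ℕ) :
    ∀ᶠ w in 𝓝 x, HasDerivAt (fun w => √(σ * (w ^ 2 - 1)) ^ m)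
      (m * w / (w ^ 2 - 1) * √(σ * (w ^ 2 - 1)) ^ m) w := by
  have hpos : ∀ᶠ w in 𝓝 x, 0 < σ * (w ^ 2 - 1) :=
    ContinuousAt.eventually_lt (by fun_prop) (by fun_prop) hx
  filter_upwards [hpos] with w hw
  refine (hasDerivAt_sqrt_pow_s12 ((hasDerivAt_sq_sub_one w).const_mul σ) hw m).congr_deriv ?_
  have hσ : σ ≠ 0 := left_ne_zero_of_mul hw.ne'
  have hw' : w ^ 2 - 1 ≠ 0 := right_ne_zero_of_mul hw.ne'
  field_simp

theorem legendreOp_sqrt_pow_mul_iteratedDeriv_legendreP (n m : ℕ) {σ : ℝ}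
    (hx : 0 < σ * (x ^ 2 - 1)) :
    legendreOp (fun w => √(σ * (w ^ 2 - 1)) ^ m * iteratedDeriv m (legendreP n) w) x =
      (n * (n + 1) + m ^ 2 / (x ^ 2 - 1)) *
        (√(σ * (x ^ 2 - 1)) ^ m * iteratedDeriv m (legendreP n) x) := by
  have hsol := isUltrasphericalSolution_iteratedDeriv_legendreP n m
  rw [legendreOp_weight_mul (sub_ne_zero.1 (right_ne_zero_of_mul hx.ne'))
    (eventually_hasDerivAt_sqrt_mul_sq_sub_one_pow hx m)
    (hsol.contDiff.of_le (WithTop.coe_le_coe.2 le_top)).contDiffAt]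
  linear_combination √(σ * (x ^ 2 - 1)) ^ m * hsol.ode x

theorem legendreOp_assocP (n m : ℕ) (hx : 1 < x ^ 2) :
    legendreOp (assocP n m) x = (n * (n + 1) + m ^ 2 / (x ^ 2 - 1)) * assocP n m x := by
  unfold assocP
  simpa only [one_mul] using
    legendreOp_sqrt_pow_mul_iteratedDeriv_legendreP n m (σ := 1) (by linarith)

theorem legendreOp_ferrersP (n m : ℕ) (hx : x ^ 2 < 1) :
    legendreOp (ferrersP n m) x = (n * (n + 1) + m ^ 2 / (x ^ 2 - 1)) * ferrersP n m x := by
  unfold ferrersP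
  simpa only [neg_one_mul, neg_sub] using
    legendreOp_sqrt_pow_mul_iteratedDeriv_legendreP n m (σ := -1) (by linarith)

end AssociatedLegendre

section Prolate

/-- The Laplacian in prolate spheroidal coordinates `(u, v, φ)`, without the common metric factor
`1 / (u² - v²)` (and the focal scale). The minus sign in front of the second term comes from
`∂ᵥ((1 - v²) ∂ᵥ g) = -legendreOp`. -/
def prolateLaplacian {E : Type*} [NormedAddCommGroup E] [NormedSpace ℝ E] (g : ℝ → ℝ → ℝ → E)
    (u v φ : ℝ) : E :=
  legendreOp (fun w => g w v φ) u - legendreOp (fun w => g u w φ) v +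
    ((u ^ 2 - v ^ 2) / ((u ^ 2 - 1) * (1 - v ^ 2))) • iteratedDeriv 2 (g u v) φ

theorem prolateLaplacian_eq_deriv_add_deriv_add (g : ℝ → ℝ → ℝ → ℂ) (u v φ : ℝ) :
    prolateLaplacian g u v φ =
      deriv (fun w : ℝ => ((w : ℂ) ^ 2 - 1) * deriv (fun w' => g w' v φ) w) u +
        deriv (fun w : ℝ => (1 - (w : ℂ) ^ 2) * deriv (fun w' => g u w' φ) w) v +
        (((u ^ 2 - v ^ 2) / ((u ^ 2 - 1) * (1 - v ^ 2)) : ℝ) : ℂ) *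
          iteratedDeriv 2 (fun w => g u v w) φ := by
  simp only [prolateLaplacian, legendreOp, Complex.real_smul, sub_eq_add_neg (deriv _ u),
    ← deriv.fun_neg, ← neg_mul, ← Complex.ofReal_neg, neg_sub]
  push_cast
  rfl

theorem prolateLaplacian_separated_eq_zero {f h p : ℝ → ℂ} {ν κ : ℂ} {u v φ : ℝ}
    (hu : u ^ 2 ≠ 1) (hv : v ^ 2 ≠ 1)
    (hf : legendreOp f u = (ν + κ / (u ^ 2 - 1)) * f u)
    (hh : legendreOp h v = (ν + κ / (v ^ 2 - 1)) * h v)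
    (hp : iteratedDeriv 2 p φ = -κ * p φ) :
    prolateLaplacian (fun u v φ => f u * h v * p φ) u v φ = 0 := by
  have hu' : (u : ℂ) ^ 2 - 1 ≠ 0 := by exact_mod_cast sub_ne_zero.2 hu
  have hv' : (v : ℂ) ^ 2 - 1 ≠ 0 := by exact_mod_cast sub_ne_zero.2 hv
  have hv₁ : 1 - (v : ℂ) ^ 2 ≠ 0 := by simpa using neg_ne_zero.2 hv'
  have hradial : legendreOp (fun w => f w * h v * p φ) u = h v * p φ * legendreOp f u := by
    rw [← legendreOp_const_mul]; congr! 2; ring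
  have hangular : legendreOp (fun w => f u * h w * p φ) v = f u * p φ * legendreOp h v := by
    rw [← legendreOp_const_mul]; congr! 2; ring
  rw [prolateLaplacian, hradial, hangular, iteratedDeriv_const_mul_field, hf, hh, hp,
    Complex.real_smul]
  push_cast
  field_simp
  ring

theorem iteratedDeriv_cexp_const_mul_ofReal (k : ℕ) (c : ℂ) :
    iteratedDeriv k (fun w : ℝ => Complex.exp (c * w)) =
      fun w : ℝ => c ^ k * Complex.exp (c * w) := by
  induction k with
  | zero => simp
  | succ k ih =>
    ext t
    have hexp : HasDerivAt (fun w : ℝ => Complex.exp (c * w)) (Complex.exp (c * t) * c) t := by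
      simpa using (((hasDerivAt_id (t : ℂ)).const_mul c).cexp).comp_ofReal
    rw [iteratedDeriv_succ, ih, deriv_const_mul_field, hexp.deriv]
    ring

end Prolate

theorem regular_solid_prolate_harmonic (n m : ℕ) (hm : m ≤ n) (u v φ : ℝ)
    (hu : 1 < u) (hv : v ∈ Set.Ioo (-1 : ℝ) 1)
    (g : ℝ → ℝ → ℝ → ℂ)
    (hg : g = fun (u' v' φ' : ℝ) =>
      ((assocP n m u' : ℝ) : ℂ) * ((ferrersP n m v' : ℝ) : ℂ) * Complex.exp (Complex.I * m * φ')) :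
    deriv (fun w : ℝ => ((w : ℂ) ^ 2 - 1) * deriv (fun w' => g w' v φ) w) u +
      deriv (fun w : ℝ => (1 - (w : ℂ) ^ 2) * deriv (fun w' => g u w' φ) w) v +
      (((u ^ 2 - v ^ 2) / ((u ^ 2 - 1) * (1 - v ^ 2)) : ℝ) : ℂ) *
        iteratedDeriv 2 (fun w => g u v w) φ = 0 := by
  have hu' : 1 < u ^ 2 := one_lt_pow₀ hu two_ne_zero
  have hv' : v ^ 2 < 1 := (sq_lt_one_iff_abs_lt_one v).2 (abs_lt.2 hv)
  rw [← prolateLaplacian_eq_deriv_add_deriv_add, hg]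
  refine prolateLaplacian_separated_eq_zero (f := fun w => (assocP n m w : ℂ))
    (h := fun w => (ferrersP n m w : ℂ)) (p := fun w => Complex.exp (Complex.I * m * w))
    (ν := n * (n + 1)) (κ := m ^ 2) hu'.ne' hv'.ne ?_ ?_ ?_
  · rw [legendreOp_ofReal_comp, legendreOp_assocP n m hu']; push_cast; rfl
  · rw [legendreOp_ofReal_comp, legendreOp_ferrersP n m hv']; push_cast; rfl
  · rw [iteratedDeriv_cexp_const_mul_ofReal, mul_pow, Complex.I_sq, neg_one_mul]
end
end
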